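/- arXiv:1703.07434 — 11 statements merged into one kernel-verified Lean document; each statement's English description precedes it below -/
import Mathlib

section
/- Let T be a ternary semigroup and let g, h be TS-characters of T. The following are equivalent: (i) h⁻¹({1}) ⊆ g⁻¹({1}); (ii) g⁻¹({0,1}) ⊆ h⁻¹({0,1}); (iii) Z(g) ⊆ Z(h) and for every a ∈ T with h(a) ≠ 0 one has g(a) = h(a); (iv) h = h²·g (pointwise product of characters). (These equivalent conditions define the specialization relation g ⇝ h.) -/
universe u

/-- A ternary semigroup: a commutative monoid with distinguished elements `0` (`tzero`)
and `-1` (`tneg`) satisfying `x³ = x`, `-1 ≠ 1`, `(-1)(-1) = 1`, `x·0 = 0`, and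
`x = -1·x → x = 0`. -/
class TernarySemigroup (G : Type u) extends CommMonoid G where
  tzero : G
  tneg : G
  cube : ∀ x : G, x * x * x = x
  tneg_ne_one : tneg ≠ 1
  tneg_mul_tneg : tneg * tneg = 1
  mul_tzero : ∀ x : G, x * tzero = tzero
  eq_tzero_of_eq_tneg_mul : ∀ x : G, x = tneg * x → x = tzero

open TernarySemigroup

/-- A TS-character of `G` with values in the ternary semigroup `3 = {-1,0,1}` (`SignType`). -/
def IsTSChar {G : Type u} [TernarySemigroup G] (h : G → SignType) : Prop :=
  (∀ x y : G, h (x * y) = h x * h y) ∧ h 1 = 1 ∧ h (tzero : G) = 0 ∧ h (tneg : G) = -1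

/-!
Multiplication by `-1` exchanges the fibres of a character over `1` and `-1`. Hence (i) holds iff
`h a = -1` implies `g a = -1`, which is (ii) read contrapositively, and the two implications
together say that `g` agrees with `h` wherever `h` does not vanish.
-/

theorem map_eq_neg_of_semiconj_neg {X M : Type*} [InvolutiveNeg M] {σ : X → X} {g h : X → M}
    (hg : Function.Semiconj g σ Neg.neg) (hh : Function.Semiconj h σ Neg.neg) {s : M}
    (fiber_subset : ∀ a, h a = s → g a = s) {a : X} (ha : h a = -s) : g a = -s := by
  have h_eq : h (σ a) = s := by rw [hh a, ha, neg_neg]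
  have g_eq : -g a = s := (hg a).symm.trans (fiber_subset (σ a) h_eq)
  exact neg_eq_iff_eq_neg.mp g_eq

theorem signType_eq_zero_or_eq_one_iff_ne_neg_one {s : SignType} : s = 0 ∨ s = 1 ↔ s ≠ -1 :=
  SignType.nonneg_iff.symm.trans SignType.nonneg_iff_ne_neg_one

theorem signType_eq_mul_self_mul_iff {s t : SignType} : s = s * s * t ↔ (s ≠ 0 → t = s) := by
  decide +revert

theorem forall_zero_or_one_imp_iff_forall_neg_one_imp {X : Type*} {g h : X → SignType} :
    (∀ a, (g a = 0 ∨ g a = 1) → (h a = 0 ∨ h a = 1)) ↔ ∀ a, h a = -1 → g a = -1 := by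
  simp only [signType_eq_zero_or_eq_one_iff_ne_neg_one, not_imp_not]

theorem stmt_0_general {X : Type*} {σ : X → X} {g h : X → SignType}
    (hg : Function.Semiconj g σ Neg.neg) (hh : Function.Semiconj h σ Neg.neg) :
    List.TFAE
      [ ∀ a, h a = 1 → g a = 1,
        ∀ a, (g a = 0 ∨ g a = 1) → (h a = 0 ∨ h a = 1),
        (∀ a, g a = 0 → h a = 0) ∧ (∀ a, h a ≠ 0 → g a = h a),
        ∀ a, h a = h a * h a * g a ] := by
  simp only [forall_zero_or_one_imp_iff_forall_neg_one_imp, signType_eq_mul_self_mul_iff]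
  tfae_have 1 → 2 := fun on_one _ => map_eq_neg_of_semiconj_neg hg hh on_one
  tfae_have 2 → 4 := by
    intro on_neg_one a h_ne_zero
    rcases SignType.trichotomy (h a) with h_neg | h_zero | h_one
    · rw [on_neg_one a h_neg, h_neg]
    · exact absurd h_zero h_ne_zero
    · have g_one : g a = - -1 :=
        map_eq_neg_of_semiconj_neg hg hh on_neg_one (h_one.trans (neg_neg 1).symm)
      rw [g_one, h_one, neg_neg]
  tfae_have 4 → 3 := fun agree =>
    ⟨fun a g_zero => by_contra fun h_ne_zero => h_ne_zero (agree a h_ne_zero ▸ g_zero), agree⟩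
  tfae_have 3 → 1 := fun ⟨_, agree⟩ a h_one =>
    (agree a (h_one ▸ one_ne_zero)).trans h_one
  tfae_finish

theorem IsTSChar.semiconj_tneg_mul {G : Type u} [TernarySemigroup G] {h : G → SignType}
    (hh : IsTSChar h) : Function.Semiconj h (tneg * ·) Neg.neg := by
  obtain ⟨map_mul, -, -, map_tneg⟩ := hh
  intro a
  rw [map_mul, map_tneg, neg_one_mul]

/-- Characterizations of the specialization relation `g ⇝ h` between TS-characters. -/
theorem stmt_0 {G : Type u} [TernarySemigroup G] (g h : G → SignType)
    (hg : IsTSChar g) (hh : IsTSChar h) :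
    List.TFAE
      [ ∀ a : G, h a = 1 → g a = 1,
        ∀ a : G, (g a = 0 ∨ g a = 1) → (h a = 0 ∨ h a = 1),
        (∀ a : G, g a = 0 → h a = 0) ∧ (∀ a : G, h a ≠ 0 → g a = h a),
        ∀ a : G, h a = h a * h a * g a ] := by
  exact stmt_0_general hg.semiconj_tneg_mul hh.semiconj_tneg_mul
end

section
/- Let T be a ternary semigroup and a, b ∈ T. The following are equivalent: (1) every TS-character h of T with h(a) = 0 satisfies h(b) = 0; (2) a²b² = b²; (3) a divides b (b = a·x for some x ∈ T); (4) b·T ⊆ a·T. -/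
universe u

open TernarySemigroup

/-!
If `a` does not divide `b`, a character vanishing at `a` but not at `b` comes from the localization
`T[b⁻¹]`. There `b` becomes a unit, while the image of `a` is a unit only if `a` divides a power of
`b`, hence, because `x³ = x`, only if `a ∣ b`. The identity `x³ = x` persists in `T[b⁻¹]`, so its
units form a vector space over `𝔽₂`, in which `-1 ≠ 1` unless `b = 0`. A linear functional that does
not kill `-1` is a sign character of the unit group, and its extension by zero to the non-units is
the required character.
-/

theorem exists_linearMap_apply_eq {K V W : Type*} [DivisionRing K] [AddCommGroup V] [Module K V]
    [AddCommMonoid W] [Module K W] {v : V} (hv : v ≠ 0) (w : W) : ∃ f : V →ₗ[K] W, f v = w := by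
  obtain ⟨φ, hφ⟩ := Module.Projective.exists_dual_ne_zero K hv
  exact ⟨φ.smulRight ((φ v)⁻¹ • w), by simp [smul_smul, hφ]⟩

theorem exists_monoidHom_apply_eq_of_pow_prime_eq_one {p : ℕ} [Fact p.Prime] {G H : Type*}
    [CommGroup G] [CommGroup H] (hG : ∀ x : G, x ^ p = 1) (hH : ∀ y : H, y ^ p = 1)
    {g : G} (hg : g ≠ 1) (h : H) : ∃ f : G →* H, f g = h := by
  let : Module (ZMod p) (Additive G) := AddCommGroup.zmodModule hG
  let : Module (ZMod p) (Additive H) := AddCommGroup.zmodModule hH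
  obtain ⟨f, hf⟩ := exists_linearMap_apply_eq (K := ZMod p) (v := Additive.ofMul g) hg
    (Additive.ofMul h)
  exact ⟨f.toAddMonoidHom.toMultiplicative, hf⟩

theorem exists_mulChar_signType_apply_eq_neg_one {M : Type*} [CommMonoid M]
    (units_sq : ∀ v : Mˣ, v ^ 2 = 1) {u : Mˣ} (hu : u ≠ 1) :
    ∃ χ : MulChar M SignType, χ u = -1 := by
  obtain ⟨f, hf⟩ := exists_monoidHom_apply_eq_of_pow_prime_eq_one units_sq
    (by decide : ∀ s : SignTypeˣ, s ^ 2 = 1) hu (Units.mk0 (-1) (by decide))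
  exact ⟨MulChar.ofUnitHom f, by rw [MulChar.ofUnitHom_coe, hf, Units.val_mk0]⟩

theorem units_pow_eq_one_of_pow_succ_eq_self {M : Type*} [Monoid M] {n : ℕ}
    (hM : ∀ x : M, x ^ (n + 1) = x) (v : Mˣ) : v ^ n = 1 := by
  have pow_succ_eq : v ^ (n + 1) = v := Units.ext (hM v)
  rwa [pow_succ, mul_eq_right] at pow_succ_eq

theorem localization_pow_eq_self {M : Type*} [CommMonoid M] {n : ℕ} (hM : ∀ x : M, x ^ n = x)
    (S : Submonoid M) (x : Localization S) : x ^ n = x := by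
  induction x with
  | H y =>
    have denom_pow : y.2 ^ n = y.2 := Subtype.ext (hM y.2)
    rw [Localization.mk_pow, hM, denom_pow]

theorem setOf_mul_subset_setOf_mul_iff_dvd {M : Type*} [Monoid M] {a b : M} :
    {y : M | ∃ t, y = b * t} ⊆ {y : M | ∃ t, y = a * t} ↔ a ∣ b :=
  ⟨fun h ↦ h ⟨1, (mul_one b).symm⟩, fun hab _ hy ↦ hab.trans hy⟩

namespace TernarySemigroup

variable {G : Type u} [TernarySemigroup G]

theorem pow_three_eq_self (x : G) : x ^ 3 = x := by
  rw [pow_three', cube]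

theorem pow_dvd_self (x : G) (n : ℕ) : x ^ n ∣ x := by
  induction n with
  | zero => simp
  | succ n ih =>
    calc x ^ (n + 1) = x ^ n * x := pow_succ x n
      _ ∣ x * x := mul_dvd_mul_right ih x
      _ ∣ x := ⟨x, (cube x).symm⟩

theorem tzero_dvd_iff {x : G} : tzero ∣ x ↔ x = tzero := by
  refine ⟨?_, fun h ↦ h ▸ dvd_rfl⟩
  rintro ⟨y, rfl⟩
  rw [mul_comm, mul_tzero]

theorem dvd_iff_mul_self_mul_mul_self_eq {a b : G} : a ∣ b ↔ a * a * (b * b) = b * b := by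
  constructor
  · rintro ⟨x, rfl⟩
    calc a * a * (a * x * (a * x)) = a * a * a * a * (x * x) := by ac_rfl
      _ = a * x * (a * x) := by rw [cube]; ac_rfl
  · intro h
    calc a ∣ a * (a * (b * b) * b) := dvd_mul_right a _
      _ = a * a * (b * b) * b := by ac_rfl
      _ = b := by rw [h, cube]

/-- The element `-1` as a unit, so that it can be mapped into the unit groups of localizations. -/
def tnegUnit (G : Type u) [TernarySemigroup G] : Gˣ :=
  ⟨tneg, tneg, tneg_mul_tneg, tneg_mul_tneg⟩

theorem map_tnegUnit_localization_ne_one {S : Submonoid G} (hS : tzero ∉ S) :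
    Units.map (Localization.monoidOf S).toMonoidHom (tnegUnit G) ≠ 1 := by
  intro map_eq_one
  have tneg_eq_one : Localization.monoidOf S tneg = Localization.monoidOf S 1 :=
    (congrArg Units.val map_eq_one).trans (map_one (Localization.monoidOf S)).symm
  obtain ⟨s, hs⟩ := (Localization.monoidOf S).eq_iff_exists.1 tneg_eq_one
  have s_eq_tzero : (s : G) = tzero :=
    eq_tzero_of_eq_tneg_mul _ (by rw [mul_comm, hs, mul_one])
  exact hS (s_eq_tzero ▸ s.2)

theorem exists_isTSChar_apply_ne_zero_iff {S : Submonoid G} (hS : tzero ∉ S) :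
    ∃ h : G → SignType, IsTSChar h ∧ ∀ x, h x ≠ 0 ↔ ∃ s ∈ S, x ∣ s := by
  let ι := Localization.monoidOf S
  have units_sq : ∀ v : (Localization S)ˣ, v ^ 2 = 1 :=
    units_pow_eq_one_of_pow_succ_eq_self (localization_pow_eq_self pow_three_eq_self S)
  obtain ⟨χ, χ_neg_one⟩ :=
    exists_mulChar_signType_apply_eq_neg_one units_sq (map_tnegUnit_localization_ne_one hS)
  have ne_zero_iff (x : G) : χ (ι x) ≠ 0 ↔ ∃ s ∈ S, x ∣ s :=
    χ.apply_ne_zero_iff.trans ι.map_isUnit_iff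
  have map_tzero : χ (ι tzero) = 0 := by
    by_contra h_ne
    obtain ⟨s, hs, tzero_dvd⟩ := (ne_zero_iff tzero).1 h_ne
    exact hS (tzero_dvd_iff.1 tzero_dvd ▸ hs)
  exact ⟨fun x ↦ χ (ι x),
    ⟨fun x y ↦ by simp only [map_mul], by simp only [map_one], map_tzero, χ_neg_one⟩, ne_zero_iff⟩

theorem tzero_notMem_powers {b : G} (hb : b ≠ tzero) : tzero ∉ Submonoid.powers b := by
  rintro ⟨n, hn⟩
  exact hb (tzero_dvd_iff.1 (hn ▸ pow_dvd_self b n))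

theorem forall_isTSChar_zero_imp_zero_iff_dvd {a b : G} :
    (∀ h : G → SignType, IsTSChar h → h a = 0 → h b = 0) ↔ a ∣ b := by
  constructor
  · intro zero_imp_zero
    by_cases hb : b = tzero
    · exact ⟨tzero, by rw [hb, mul_tzero]⟩
    obtain ⟨h, h_char, ne_zero_iff⟩ := exists_isTSChar_apply_ne_zero_iff (tzero_notMem_powers hb)
    have hb_ne : h b ≠ 0 := (ne_zero_iff b).2 ⟨b, Submonoid.mem_powers b, dvd_rfl⟩
    have ha_ne : h a ≠ 0 := mt (zero_imp_zero h h_char) hb_ne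
    obtain ⟨_, ⟨n, rfl⟩, a_dvd_pow⟩ := (ne_zero_iff a).1 ha_ne
    exact a_dvd_pow.trans (pow_dvd_self b n)
  · rintro ⟨x, rfl⟩ h ⟨map_mul, -⟩ ha
    rw [map_mul, ha, zero_mul]

end TernarySemigroup

/-- Divisibility and zero-set inclusion for elements of a ternary semigroup. -/
theorem stmt_2 {G : Type u} [TernarySemigroup G] (a b : G) :
    List.TFAE
      [ ∀ h : G → SignType, IsTSChar h → h a = 0 → h b = 0,
        (a * a) * (b * b) = b * b,
        ∃ x : G, b = a * x,
        {y : G | ∃ t : G, y = b * t} ⊆ {y : G | ∃ t : G, y = a * t} ] := by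
  tfae_have 1 ↔ 3 := forall_isTSChar_zero_imp_zero_iff_dvd
  tfae_have 3 ↔ 2 := dvd_iff_mul_self_mul_mul_self_eq
  tfae_have 4 ↔ 3 := setOf_mul_subset_setOf_mul_iff_dvd
  tfae_finish
end

section
/- Let G be a ternary semigroup with a ternary relation D satisfying axioms [RS0] (c ∈ D(a,b) iff c ∈ D(b,a)) and [RS2] (a ∈ D(b,c) implies ad ∈ D(bd,cd)), and let D^t be defined from D by the transversal clause. Then the strong associativity axiom [RS3] (if a ∈ D^t(b,c) and c ∈ D^t(d,e), then there exists x ∈ D^t(b,d) with a ∈ D^t(x,e)) holds if and only if [RS3′] holds: for all a, b, c, d, if D^t(a,b) ∩ D^t(c,d) ≠ ∅ then D^t(a,-c) ∩ D^t(-b,d) ≠ ∅. -/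
universe u

open TernarySemigroup

/-- The transversal representation relation derived from a ternary relation `D`
(`Dt D a b c` means `a ∈ D^t(b,c)`, where `D c a b` means `c ∈ D(a,b)`). -/
def Dt {G : Type u} [TernarySemigroup G] (D : G → G → G → Prop) (a b c : G) : Prop :=
  D a b c ∧ D (tneg * b) (tneg * a) c ∧ D (tneg * c) b (tneg * a)

/-! Under symmetry and invariance under negation, `D^t` is reversible: `a ∈ D^t(b, c)` gives
`b ∈ D^t(a, -c)`, so terms move across the membership sign as in an equation `a = b + c`. Strong
associativity reads `a = b + (d + e) → a = (b + d) + e` and [RS3'] reads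
`a + b = c + d → a - c = -b + d`; moving terms turns each into the other. -/

/-- Strong associativity [RS3] of a hyperoperation, where `T a b c` means that `a` is one of the
values of `b + c`. -/
def IsStronglyAssociative {G : Type u} (T : G → G → G → Prop) : Prop :=
  ∀ a b c d e, T a b c → T c d e → ∃ x, T x b d ∧ T a x e

section Neg

variable {G : Type u} [Neg G]

/-- The transposition property [RS3'] of a hyperoperation: if `a + b` meets `c + d`, then `a - c`
meets `-b + d`. As in `IsStronglyAssociative`, the first argument of `T` is the value. -/
def HasTransposition (T : G → G → G → Prop) : Prop :=
  ∀ a b c d, (∃ x, T x a b ∧ T x c d) → ∃ y, T y a (-c) ∧ T y (-b) d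

/-- Reversibility of a commutative hyperoperation: summands may be exchanged, and moved to the
other side with a change of sign. As in `IsStronglyAssociative`, the first argument of `T` is the
value. -/
structure IsReversible (T : G → G → G → Prop) : Prop where
  symm {a b c : G} : T a b c → T a c b
  reverse {a b c : G} : T a b c → T b a (-c)

/-- The transversal relation `D^t` for an arbitrary negation; it unfolds to `Dt` when negation is
multiplication by `tneg`. -/
def transversal (D : G → G → G → Prop) (a b c : G) : Prop :=
  D a b c ∧ D (-b) (-a) c ∧ D (-c) b (-a)

theorem IsReversible.hasTransposition {T : G → G → G → Prop} (hT : IsReversible T)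
    (assoc : IsStronglyAssociative T) : HasTransposition T := by
  rintro a b c d ⟨x, hab, hcd⟩
  have ha : T a (-b) x := hT.symm (hT.reverse hab)
  obtain ⟨y, hy, hay⟩ := assoc a (-b) x d c ha (hT.symm hcd)
  exact ⟨y, hT.reverse hay, hy⟩

end Neg

section InvolutiveNeg

variable {G : Type u} [InvolutiveNeg G] {T D : G → G → G → Prop} {a b c : G}

namespace IsReversible

theorem of_neg_right (hT : IsReversible T) (h : T a b (-c)) : T b a c := by
  simpa only [neg_neg] using hT.reverse h

theorem isStronglyAssociative (hT : IsReversible T) (transpose : HasTransposition T) :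
    IsStronglyAssociative T := by
  intro a b c d e ha hc
  have hca : T c a (-b) := hT.reverse (hT.symm ha)
  obtain ⟨y, hya, hy⟩ := transpose a (-b) e d ⟨c, hca, hT.symm hc⟩
  rw [neg_neg] at hy
  exact ⟨y, hy, hT.of_neg_right hya⟩

end IsReversible

theorem isReversible_transversal (D_comm : ∀ a b c, D c a b ↔ D c b a)
    (D_neg : ∀ a b c, D a b c → D (-a) (-b) (-c)) : IsReversible (transversal D) where
  symm := fun ⟨ha, hb, hc⟩ => ⟨(D_comm _ _ _).1 ha, (D_comm _ _ _).1 hc, (D_comm _ _ _).1 hb⟩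
  reverse := fun {a b c} ⟨ha, hb, hc⟩ => by
    have hb' : D b a (-c) := by simpa only [neg_neg] using D_neg _ _ _ hb
    have hc' : D (- -c) (-b) a := by simpa only [neg_neg a] using D_neg _ _ _ hc
    exact ⟨hb', D_neg _ _ _ ha, (D_comm _ _ _).1 hc'⟩

theorem stmt_4_general (D_comm : ∀ a b c, D c a b ↔ D c b a)
    (D_neg : ∀ a b c, D a b c → D (-a) (-b) (-c)) :
    IsStronglyAssociative (transversal D) ↔ HasTransposition (transversal D) :=
  have hD := isReversible_transversal D_comm D_neg
  ⟨hD.hasTransposition, hD.isStronglyAssociative⟩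

end InvolutiveNeg

/-- Negation `-x = (-1) · x` of a ternary semigroup. -/
instance TernarySemigroup.instInvolutiveNeg {G : Type u} [TernarySemigroup G] :
    InvolutiveNeg G where
  neg x := tneg * x
  neg_neg x := by rw [← mul_assoc, tneg_mul_tneg, one_mul]

theorem TernarySemigroup.neg_eq_mul_tneg {G : Type u} [TernarySemigroup G] (x : G) :
    -x = x * tneg :=
  mul_comm tneg x

/-- In the presence of [RS0] and [RS2], strong associativity [RS3] is equivalent to [RS3']. -/
theorem stmt_4 {G : Type u} [TernarySemigroup G] (D : G → G → G → Prop)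
    (rs0 : ∀ a b c : G, D c a b ↔ D c b a)
    (rs2 : ∀ a b c d : G, D a b c → D (a * d) (b * d) (c * d)) :
    (∀ a b c d e : G, Dt D a b c → Dt D c d e → ∃ x : G, Dt D x b d ∧ Dt D a x e) ↔
    (∀ a b c d : G, (∃ x : G, Dt D x a b ∧ Dt D x c d) →
      ∃ y : G, Dt D y a (tneg * c) ∧ Dt D y (tneg * b) d) :=
  stmt_4_general rs0 fun a b c h => by
    simpa only [neg_eq_mul_tneg] using rs2 a b c tneg h
end

section
/- Let G be a ternary semigroup and let H be a nonempty set of TS-characters of G that separates points (for a ≠ b in G there is h ∈ H with h(a) ≠ h(b)). Define the ternary relation D_H on G by: a ∈ D_H(b,c) iff for every h ∈ H, h(a) = 0 or h(a) = h(b) or h(a) = h(c). Then D_H satisfies all the real semigroup axioms except possibly strong associativity; that is, D_H satisfies [RS0], [RS1], [RS2], [RS4], [RS5], [RS6], [RS7] and [RS8]. -/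
universe u

open TernarySemigroup

/-- The representation relation induced on `G` by a set `H` of TS-characters:
`DH H a b c` means `a ∈ D_H(b,c)`. -/
def DH {G : Type u} [TernarySemigroup G] (H : Set (G → SignType)) (a b c : G) : Prop :=
  ∀ h ∈ H, h a = 0 ∨ h a = h b ∨ h a = h c

/-!
Every axiom is tested character by character, so it reduces to a statement about the
representation relation of `3 = {-1, 0, 1}`. For [RS5] and [RS7], separation of points turns
equality at every character into equality in `G`. For [RS7], transversal representation by `a`
and `-b` in `3` behaves like the sign of a difference: it forces the value `1` if `b < a` and
`-1` if `a < b`, so no value is represented both by `a, -b` and by `b, -a` unless `a = b`.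
-/

/-- The representation relation of the ternary semigroup `3`: `SignRep x y z` means
`x ∈ D(y, z)`. -/
def SignRep (x y z : SignType) : Prop :=
  x = 0 ∨ x = y ∨ x = z

/-- The transversal relation of the ternary semigroup `3`: `SignTransRep x y z` means
`x ∈ D^t(y, z)`. It is stated with the negation of `SignType`, which characters carry
multiplication by `tneg` to. -/
def SignTransRep (x y z : SignType) : Prop :=
  SignRep x y z ∧ SignRep (-y) (-x) z ∧ SignRep (-z) y (-x)

instance (x y z : SignType) : Decidable (SignRep x y z) :=
  inferInstanceAs (Decidable (_ ∨ _))

instance (x y z : SignType) : Decidable (SignTransRep x y z) :=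
  inferInstanceAs (Decidable (_ ∧ _))

theorem sign_mul_self_mul_eq_zero_or_eq (s x : SignType) : s * s * x = 0 ∨ s * s * x = x := by
  revert s x
  decide

namespace SignRep

variable {x y z : SignType}

theorem symm (hx : SignRep x y z) : SignRep x z y :=
  Or.imp_right Or.symm hx

theorem map {f : SignType → SignType} (hf : f 0 = 0) (hx : SignRep x y z) :
    SignRep (f x) (f y) (f z) := by
  rcases hx with rfl | rfl | rfl
  · exact .inl hf
  · exact .inr (.inl rfl)
  · exact .inr (.inr rfl)

theorem mul_right (hx : SignRep x y z) (w : SignType) : SignRep (x * w) (y * w) (z * w) :=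
  hx.map (f := (· * w)) (zero_mul w)

theorem mul_self (hx : SignRep x y z) : SignRep (x * x) (y * y) (z * z) :=
  hx.map (f := fun s => s * s) (zero_mul 0)

theorem of_mul_self_mul {s t : SignType} (hx : SignRep x (s * s * y) (t * t * z)) :
    SignRep x y z := by
  rcases hx with hx | hx | hx
  · exact .inl hx
  · exact (sign_mul_self_mul_eq_zero_or_eq s y).imp hx.trans fun hy => .inl (hx.trans hy)
  · exact (sign_mul_self_mul_eq_zero_or_eq t z).imp hx.trans fun hz => .inr (hx.trans hz)

theorem mul_eq_mul {s t : SignType} (hx : SignRep x y z) (hy : s * y = t * y)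
    (hz : s * z = t * z) : s * x = t * x := by
  rcases hx with rfl | rfl | rfl
  · rw [mul_zero, mul_zero]
  · exact hy
  · exact hz

theorem signTransRep_mul_self_mul (hx : SignRep x y z) :
    SignTransRep x (x * x * y) (x * x * z) := by
  revert x y z
  decide

end SignRep

namespace SignTransRep

variable {x y z : SignType}

theorem eq_one_of_lt (hx : SignTransRep x y (-z)) (hzy : z < y) : x = 1 := by
  revert x y z
  decide

theorem eq_neg_one_of_lt (hx : SignTransRep x y (-z)) (hyz : y < z) : x = -1 := by
  revert x y z
  decide

theorem eq_of_swap (hyz : SignTransRep x y (-z)) (hzy : SignTransRep x z (-y)) : y = z := by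
  rcases lt_trichotomy y z with hlt | heq | hgt
  · exact absurd ((hzy.eq_one_of_lt hlt).symm.trans (hyz.eq_neg_one_of_lt hlt)) (by decide)
  · exact heq
  · exact absurd ((hyz.eq_one_of_lt hgt).symm.trans (hzy.eq_neg_one_of_lt hgt)) (by decide)

end SignTransRep

theorem eq_of_separatesPoints {α β : Type*} {H : Set (α → β)} (hsep : H.SeparatesPoints)
    {a b : α} (hab : ∀ h ∈ H, h a = h b) : a = b := by
  by_contra hne
  obtain ⟨h, hh, hhab⟩ := hsep hne
  exact hhab (hab h hh)

namespace IsTSChar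

variable {G : Type u} [TernarySemigroup G] {h : G → SignType}

theorem map_mul (hh : IsTSChar h) (a b : G) : h (a * b) = h a * h b :=
  hh.1 a b

theorem map_mul_self_mul (hh : IsTSChar h) (a b : G) : h (a * a * b) = h a * h a * h b := by
  rw [hh.map_mul, hh.map_mul]

theorem map_tneg_mul (hh : IsTSChar h) (a : G) : h (tneg * a) = -h a := by
  rw [hh.map_mul, hh.2.2.2, neg_one_mul]

end IsTSChar

namespace DH

variable {G : Type u} [TernarySemigroup G] {H : Set (G → SignType)} {a b c d e : G}

theorem symm (hc : DH H c a b) : DH H c b a :=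
  fun h hh => SignRep.symm (hc h hh)

theorem self_left (H : Set (G → SignType)) (a b : G) : DH H a a b :=
  fun _ _ => .inr (.inl rfl)

theorem mul_right (hchar : ∀ h ∈ H, IsTSChar h) (ha : DH H a b c) (d : G) :
    DH H (a * d) (b * d) (c * d) := by
  intro h hh
  simp only [(hchar h hh).map_mul]
  exact SignRep.mul_right (ha h hh) (h d)

theorem mul_self (hchar : ∀ h ∈ H, IsTSChar h) (ha : DH H a b c) :
    DH H (a * a) (b * b) (c * c) := by
  intro h hh
  simp only [(hchar h hh).map_mul]
  exact SignRep.mul_self (ha h hh)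

theorem of_mul_self_mul (hchar : ∀ h ∈ H, IsTSChar h) (he : DH H e (c * c * a) (d * d * b)) :
    DH H e a b := by
  intro h hh
  have he_apply := he h hh
  simp only [(hchar h hh).map_mul_self_mul] at he_apply
  exact SignRep.of_mul_self_mul he_apply

theorem mul_eq_mul (hchar : ∀ h ∈ H, IsTSChar h) (hsep : H.SeparatesPoints)
    (hc : DH H c d e) (hd : a * d = b * d) (he : a * e = b * e) : a * c = b * c := by
  refine eq_of_separatesPoints hsep fun h hh => ?_
  have hd_apply := congrArg h hd
  have he_apply := congrArg h he
  simp only [(hchar h hh).map_mul] at hd_apply he_apply ⊢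
  exact SignRep.mul_eq_mul (hc h hh) hd_apply he_apply

theorem dt_iff (hchar : ∀ h ∈ H, IsTSChar h) :
    Dt (DH H) a b c ↔ ∀ h ∈ H, SignTransRep (h a) (h b) (h c) := by
  simp only [Dt, DH, SignTransRep, SignRep, ← forall_and]
  refine forall₂_congr fun h hh => ?_
  simp only [(hchar h hh).map_tneg_mul]

theorem dt_mul_self_mul (hchar : ∀ h ∈ H, IsTSChar h) (hc : DH H c a b) :
    Dt (DH H) c (c * c * a) (c * c * b) := by
  refine (dt_iff hchar).2 fun h hh => ?_
  simp only [(hchar h hh).map_mul_self_mul]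
  exact SignRep.signTransRep_mul_self_mul (hc h hh)

theorem eq_of_dt_swap (hchar : ∀ h ∈ H, IsTSChar h) (hsep : H.SeparatesPoints)
    (hab : Dt (DH H) c a (tneg * b)) (hba : Dt (DH H) c b (tneg * a)) : a = b := by
  refine eq_of_separatesPoints hsep fun h hh => ?_
  have hab_apply := (dt_iff hchar).1 hab h hh
  have hba_apply := (dt_iff hchar).1 hba h hh
  rw [(hchar h hh).map_tneg_mul] at hab_apply hba_apply
  exact hab_apply.eq_of_swap hba_apply

end DH

/-- The relation induced by a nonempty point-separating set of TS-characters satisfies all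
real semigroup axioms except possibly strong associativity [RS3]: it satisfies
[RS0], [RS1], [RS2], [RS4], [RS5], [RS6], [RS7], [RS8]. -/
theorem stmt_5 {G : Type u} [TernarySemigroup G] (H : Set (G → SignType))
    (hne : H.Nonempty) (hchar : ∀ h ∈ H, IsTSChar h)
    (hsep : ∀ a b : G, a ≠ b → ∃ h ∈ H, h a ≠ h b) :
    (∀ a b c : G, DH H c a b ↔ DH H c b a) ∧
    (∀ a b : G, DH H a a b) ∧
    (∀ a b c d : G, DH H a b c → DH H (a * d) (b * d) (c * d)) ∧
    (∀ a b c d e : G, DH H e (c * c * a) (d * d * b) → DH H e a b) ∧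
    (∀ a b c d e : G, a * d = b * d → a * e = b * e → DH H c d e → a * c = b * c) ∧
    (∀ a b c : G, DH H c a b → Dt (DH H) c (c * c * a) (c * c * b)) ∧
    (∀ a b : G, (∃ x : G, Dt (DH H) x a (tneg * b) ∧ Dt (DH H) x b (tneg * a)) → a = b) ∧
    (∀ a b c : G, DH H a b c → DH H (a * a) (b * b) (c * c)) := by
  exact ⟨fun _ _ _ => ⟨DH.symm, DH.symm⟩,
    DH.self_left H,
    fun _ _ _ d ha => ha.mul_right hchar d,
    fun _ _ _ _ _ he => he.of_mul_self_mul hchar,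
    fun _ _ _ _ _ hd he hc => hc.mul_eq_mul hchar hsep hd he,
    fun _ _ _ hc => hc.dt_mul_self_mul hchar,
    fun _ _ ⟨_, hab, hba⟩ => DH.eq_of_dt_swap hchar hsep hab hba,
    fun _ _ _ ha => ha.mul_self hchar⟩
end

section
/- Let G be a ternary semigroup satisfying condition [Z], and let X ⊆ Hom_TS(G,3) be such that (X,G) is a q-fan. Define D_X by: c ∈ D_X(a,b) iff for every h ∈ X, h(c) = 0 or h(c) = h(a) or h(c) = h(b). Then for all a, b ∈ G: D_X(a,b) = a·Id(G) ∪ b·Id(G) ∪ {x ∈ G : xa = -xb and x = a²x}, where Id(G) = {x² : x ∈ G}. -/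
universe u

open TernarySemigroup

/-- Condition [Z]: the zero sets of elements are totally ordered, algebraically:
`a²b² = a²` or `a²b² = b²` for all `a, b`. -/
def CondZ (G : Type u) [TernarySemigroup G] : Prop :=
  ∀ a b : G, a * a * (b * b) = a * a ∨ a * a * (b * b) = b * b

/-- `(X, G)` is a q-fan: `X` is a nonempty set of TS-characters of `G`, closed under the
pointwise product of any three of its members, and separating points of `G`. -/
def IsQFan (G : Type u) [TernarySemigroup G] (X : Set (G → SignType)) : Prop :=
  X.Nonempty ∧ (∀ h ∈ X, IsTSChar h) ∧
  (∀ h₁ ∈ X, ∀ h₂ ∈ X, ∀ h₃ ∈ X, h₁ * h₂ * h₃ ∈ X) ∧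
  (∀ a b : G, a ≠ b → ∃ h ∈ X, h a ≠ h b)

/-!
Since `X` separates points, `a·Id(G)` is `D_X(a, a)`, and the third set of the theorem is
`D_X(a, b) ∩ D_X(-a, -b)`. It remains to see that every `c ∈ D_X(a, b)` outside
`D_X(a, a) ∪ D_X(b, b)` lies in `D_X(-a, -b)`. Such a `c` comes with `f, g ∈ X` satisfying
`f a ≠ f c = f b ≠ 0` and `g b ≠ g c = g a ≠ 0`. Membership of `f²g` and `g²f` in `X` forces
`f a = -f c` and `g b = -g c`. Hence for `h ∈ X` the product `hfg ∈ X` takes, up to the common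
nonzero factor `f c * g c`, the values `h c`, `-h a`, `-h b` at `c`, `a`, `b`.
-/

theorem signType_mul_self_eq_one {s : SignType} (hs : s ≠ 0) : s * s = 1 := by
  decide +revert

theorem signType_eq_neg_of_ne {s t : SignType} (hs : s ≠ 0) (ht : t ≠ 0) (hst : s ≠ t) :
    s = -t := by
  decide +revert

theorem signType_mul_sq_eq_zero_or_self (s t : SignType) : s * (t * t) = 0 ∨ s * (t * t) = s := by
  decide +revert

theorem signType_eq_mul_sq_self_iff {s t : SignType} : s = t * (s * s) ↔ s = 0 ∨ s = t := by
  decide +revert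

theorem signType_mul_eq_neg_mul_and_eq_sq_mul_iff {s t u : SignType} :
    s * t = -(s * u) ∧ s = t * t * s ↔
      (s = 0 ∨ s = t ∨ s = u) ∧ (s = 0 ∨ s = -t ∨ s = -u) := by
  decide +revert

/-- The representation relation `D_X(a, b)` of a set `X` of sign-valued functions, as a set. It is
defined on an arbitrary type, since its main decomposition needs no multiplication on the domain. -/
def representedSet {α : Type*} (X : Set (α → SignType)) (a b : α) : Set α :=
  {c | ∀ h ∈ X, h c = 0 ∨ h c = h a ∨ h c = h b}

section RepresentedSet

variable {α : Type*} {X : Set (α → SignType)} {a b c : α}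

theorem representedSet_comm (X : Set (α → SignType)) (a b : α) :
    representedSet X a b = representedSet X b a := by
  ext c
  exact forall₂_congr fun _ _ => or_congr_right or_comm

theorem mem_representedSet_self : c ∈ representedSet X a a ↔ ∀ h ∈ X, h c = 0 ∨ h c = h a := by
  simp only [representedSet, Set.mem_ofPred_eq, or_self]

theorem representedSet_self_subset_left : representedSet X a a ⊆ representedSet X a b :=
  fun _ hc h hh => (mem_representedSet_self.mp hc h hh).imp_right Or.inl

theorem representedSet_self_subset_right : representedSet X b b ⊆ representedSet X a b := by
  rw [representedSet_comm X a b]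
  exact representedSet_self_subset_left

theorem exists_eq_right_ne_left_of_notMem_representedSet_self (hc : c ∈ representedSet X a b)
    (hca : c ∉ representedSet X a a) : ∃ f ∈ X, f c ≠ 0 ∧ f c = f b ∧ f a ≠ f c := by
  simp only [mem_representedSet_self, not_forall, not_or] at hca
  obtain ⟨f, hf, hfc, hfca⟩ := hca
  exact ⟨f, hf, hfc, ((hc f hf).resolve_left hfc).resolve_left hfca, Ne.symm hfca⟩

variable (hX : ∀ h₁ ∈ X, ∀ h₂ ∈ X, ∀ h₃ ∈ X, h₁ * h₂ * h₃ ∈ X)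
include hX

theorem apply_left_eq_neg_of_mem_representedSet (hc : c ∈ representedSet X a b)
    {f g : α → SignType} (hf : f ∈ X) (hg : g ∈ X)
    (hfc : f c ≠ 0) (hfcb : f c = f b) (hfa : f a ≠ f c)
    (hgc : g c ≠ 0) (hgb : g b ≠ g c) : f a = -f c := by
  refine signType_eq_neg_of_ne (fun hfa0 => ?_) hfc hfa
  have hffg : g c = 0 ∨ g c = 0 ∨ g c = g b := by
    simpa [← hfcb, hfa0, signType_mul_self_eq_one hfc] using hc _ (hX f hf f hf g hg)
  rcases hffg with h0 | h0 | hb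
  exacts [hgc h0, hgc h0, hgb hb.symm]

theorem forall_eq_zero_or_eq_neg_of_notMem_representedSet_self (hc : c ∈ representedSet X a b)
    (hca : c ∉ representedSet X a a) (hcb : c ∉ representedSet X b b) :
    ∀ h ∈ X, h c = 0 ∨ h c = -h a ∨ h c = -h b := by
  have hc' : c ∈ representedSet X b a := representedSet_comm X a b ▸ hc
  obtain ⟨f, hf, hfc, hfcb, hfa⟩ := exists_eq_right_ne_left_of_notMem_representedSet_self hc hca
  obtain ⟨g, hg, hgc, hgca, hgb⟩ := exists_eq_right_ne_left_of_notMem_representedSet_self hc' hcb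
  have hfa_neg : f a = -f c :=
    apply_left_eq_neg_of_mem_representedSet hX hc hf hg hfc hfcb hfa hgc hgb
  have hgb_neg : g b = -g c :=
    apply_left_eq_neg_of_mem_representedSet hX hc' hg hf hgc hgca hgb hfc hfa
  intro h hh
  have hhfg : h c * (f c * g c) = 0 ∨ h c * (f c * g c) = -h a * (f c * g c) ∨
      h c * (f c * g c) = -h b * (f c * g c) := by
    simpa [hfa_neg, hgb_neg, ← hfcb, ← hgca, mul_assoc] using hc _ (hX h hh f hf g hg)
  have hfg : f c * g c ≠ 0 := mul_ne_zero hfc hgc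
  exact hhfg.imp (fun h0 => (mul_eq_zero.mp h0).resolve_right hfg)
    (Or.imp (mul_right_cancel₀ hfg) (mul_right_cancel₀ hfg))

end RepresentedSet

section QFan

variable {G : Type u} [TernarySemigroup G]

theorem IsTSChar.map_tneg_mul_s7 {h : G → SignType} (hh : IsTSChar h) (x : G) :
    h (tneg * x) = -h x := by
  rw [hh.1, hh.2.2.2, neg_one_mul]

variable {X : Set (G → SignType)} (hX : IsQFan G X)
include hX

theorem IsQFan.eq_iff {x y : G} : x = y ↔ ∀ h ∈ X, h x = h y := by
  refine ⟨fun hxy h _ => congrArg h hxy, fun hxy => ?_⟩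
  by_contra hne
  obtain ⟨h, hh, hhne⟩ := hX.2.2.2 x y hne
  exact hhne (hxy h hh)

theorem IsQFan.representedSet_self (a : G) :
    representedSet X a a = {c : G | ∃ x : G, c = a * (x * x)} := by
  ext c
  rw [mem_representedSet_self]
  constructor
  · refine fun hc => ⟨c, hX.eq_iff.mpr fun h hh => ?_⟩
    rw [(hX.2.1 h hh).1, (hX.2.1 h hh).1]
    exact signType_eq_mul_sq_self_iff.mpr (hc h hh)
  · rintro ⟨x, rfl⟩ h hh
    rw [(hX.2.1 h hh).1, (hX.2.1 h hh).1]
    exact signType_mul_sq_eq_zero_or_self (h a) (h x)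

theorem IsQFan.representedSet_inter_representedSet_tneg (a b : G) :
    representedSet X a b ∩ representedSet X (tneg * a) (tneg * b) =
      {c : G | c * a = tneg * (c * b) ∧ c = a * a * c} := by
  ext c
  simp only [representedSet, Set.mem_inter_iff, Set.mem_ofPred_eq, hX.eq_iff, ← forall₂_and]
  refine forall₂_congr fun h hh => ?_
  have hchar := hX.2.1 h hh
  simp only [hchar.map_tneg_mul_s7, hchar.1]
  exact signType_mul_eq_neg_mul_and_eq_sq_mul_iff.symm

theorem IsQFan.representedSet_subset (a b : G) :
    representedSet X a b ⊆ representedSet X a a ∪ representedSet X b b ∪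
      representedSet X (tneg * a) (tneg * b) := by
  intro c hc
  by_cases hca : c ∈ representedSet X a a
  · exact .inl (.inl hca)
  by_cases hcb : c ∈ representedSet X b b
  · exact .inl (.inr hcb)
  refine .inr fun h hh => ?_
  rw [(hX.2.1 h hh).map_tneg_mul_s7, (hX.2.1 h hh).map_tneg_mul_s7]
  exact forall_eq_zero_or_eq_neg_of_notMem_representedSet_self hX.2.2.1 hc hca hcb h hh

end QFan

theorem stmt_7_general {G : Type u} [TernarySemigroup G]
    (X : Set (G → SignType)) (hX : IsQFan G X) (a b : G) :
    {c : G | ∀ h ∈ X, h c = 0 ∨ h c = h a ∨ h c = h b} =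
      {c : G | ∃ x : G, c = a * (x * x)} ∪ {c : G | ∃ x : G, c = b * (x * x)} ∪
      {c : G | c * a = tneg * (c * b) ∧ c = a * a * c} := by
  rw [← hX.representedSet_self a, ← hX.representedSet_self b,
    ← hX.representedSet_inter_representedSet_tneg a b]
  apply Set.Subset.antisymm
  · intro c hc
    exact (hX.representedSet_subset a b hc).imp_right fun hneg => ⟨hc, hneg⟩
  · exact Set.union_subset
      (Set.union_subset representedSet_self_subset_left representedSet_self_subset_right)
      Set.inter_subset_left

/-- Explicit description of the representation relation in a q-fan over a ternary semigroup
satisfying condition [Z]: `D_X(a,b) = a·Id(G) ∪ b·Id(G) ∪ {x | xa = -xb ∧ x = a²x}`. -/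
theorem stmt_7 {G : Type u} [TernarySemigroup G] (hZ : CondZ G)
    (X : Set (G → SignType)) (hX : IsQFan G X) (a b : G) :
    {c : G | ∀ h ∈ X, h c = 0 ∨ h c = h a ∨ h c = h b} =
      {c : G | ∃ x : G, c = a * (x * x)} ∪ {c : G | ∃ x : G, c = b * (x * x)} ∪
      {c : G | c * a = tneg * (c * b) ∧ c = a * a * c} :=
  stmt_7_general X hX a b
end

section
/- Let G be a ternary semigroup satisfying condition [Z]. Define the ternary relation D on G by the fan formula: c ∈ D(a,b) iff c ∈ a·Id(G) ∪ b·Id(G) or (ca = -cb and c = a²c), and define D^t from D by the transversal clause. Then D^t satisfies the case description: (i) if a²b² = b² and a² ≠ b² then D^t(a,b) = {a}; (ii) if a²b² = a² and a² ≠ b² then D^t(a,b) = {b}; (iii) if a² = b² and b ≠ -a then D^t(a,b) = {a, b}; (iv) if b = -a then D^t(a,b) = a·G. -/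
universe u

open TernarySemigroup

/-- The fan representation relation on a ternary semigroup:
`fanD c a b` means `c ∈ D(a,b)`, i.e. `c ∈ a·Id(G) ∪ b·Id(G)` or (`ca = -cb` and `c = a²c`). -/
def fanD {G : Type u} [TernarySemigroup G] (c a b : G) : Prop :=
  (∃ x : G, c = a * (x * x)) ∨ (∃ x : G, c = b * (x * x)) ∨
  (c * a = tneg * (c * b) ∧ c = a * a * c)

/-!
In a ternary semigroup `a²b² = b²` says exactly that `a ∣ b`, so the squares appearing in the cases
only record divisibility. Suppose `a ∣ b` and `c ∈ D^t(a,b)`. Then `c ∈ D(a,b)` forces `a ∣ c`, and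
the three alternatives in `-a ∈ D(-c,b)` become `c = a`, `b = -a`, and `c = b ∣ a` respectively.
-/

namespace TernarySemigroup

variable {G : Type u} [TernarySemigroup G] {a b c : G}

theorem isUnit_tneg : IsUnit (tneg : G) :=
  IsUnit.of_mul_eq_one _ tneg_mul_tneg

theorem tneg_mul_tneg_mul (a : G) : tneg * (tneg * a) = a := by
  rw [← mul_assoc, tneg_mul_tneg, one_mul]

theorem tneg_mul_mul_tneg_mul (a b : G) : tneg * a * (tneg * b) = a * b := by
  rw [mul_mul_mul_comm, tneg_mul_tneg, one_mul]

theorem dvd_iff_mul_self_mul_eq : a ∣ b ↔ a * a * b = b := by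
  constructor
  · rintro ⟨x, rfl⟩
    rw [← mul_assoc, cube]
  · intro h
    exact ⟨a * b, by rw [← mul_assoc, h]⟩

theorem dvd_mul_self_iff : a ∣ b * b ↔ a ∣ b :=
  ⟨fun h => cube b ▸ h.mul_right b, fun h => h.mul_right b⟩

theorem mul_self_mul_mul_self_eq_right_iff : a * a * (b * b) = b * b ↔ a ∣ b := by
  rw [← dvd_iff_mul_self_mul_eq, dvd_mul_self_iff]

theorem mul_self_mul_mul_self_eq_left_iff : a * a * (b * b) = a * a ↔ b ∣ a := by
  rw [mul_comm, mul_self_mul_mul_self_eq_right_iff]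

theorem mul_self_eq_mul_self_iff_dvd_dvd : a * a = b * b ↔ a ∣ b ∧ b ∣ a := by
  constructor
  · intro h
    exact ⟨dvd_mul_self_iff.mp (h ▸ dvd_mul_right a a), dvd_mul_self_iff.mp (h ▸ dvd_mul_right b b)⟩
  · rintro ⟨hab, hba⟩
    rw [← mul_self_mul_mul_self_eq_left_iff.mpr hba, mul_self_mul_mul_self_eq_right_iff.mpr hab]

theorem exists_eq_mul_mul_self_iff : (∃ x : G, c = a * (x * x)) ↔ a * (c * c) = c := by
  constructor
  · rintro ⟨x, rfl⟩
    calc a * (a * (x * x) * (a * (x * x))) = a * a * a * (x * x * x * x) := by ac_rfl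
      _ = a * (x * x) := by rw [cube, cube]
  · intro h
    exact ⟨c, h.symm⟩

end TernarySemigroup

section Fan

variable {G : Type u} [TernarySemigroup G] {a b c : G}

theorem fanD_iff :
    fanD c a b ↔ a * (c * c) = c ∨ b * (c * c) = c ∨ c * a = tneg * (c * b) ∧ a ∣ c := by
  rw [fanD, exists_eq_mul_mul_self_iff, exists_eq_mul_mul_self_iff, dvd_iff_mul_self_mul_eq,
    eq_comm (a := c) (b := a * a * c)]

theorem fanD_self_left (a b : G) : fanD a a b :=
  Or.inl ⟨1, by rw [mul_one, mul_one]⟩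

theorem fanD_self_right (a b : G) : fanD b a b :=
  Or.inr (Or.inl ⟨1, by rw [mul_one, mul_one]⟩)

theorem fanD_symm (h : fanD c a b) : fanD c b a := by
  rw [fanD_iff] at h ⊢
  rcases h with hca | hcb | ⟨hopp, hac⟩
  · exact Or.inr (Or.inl hca)
  · exact Or.inl hcb
  · have hopp' : c * b = tneg * (c * a) := by rw [hopp, tneg_mul_tneg_mul]
    have hbca : b ∣ c * a := hopp ▸ (dvd_mul_left b c).mul_left tneg
    have hbc : b ∣ c := by
      rw [← dvd_iff_mul_self_mul_eq.mp hac, mul_assoc, mul_comm a c]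
      exact hbca.mul_left a
    exact Or.inr (Or.inr ⟨hopp', hbc⟩)

theorem dt_fanD_symm (h : Dt fanD c a b) : Dt fanD c b a :=
  ⟨fanD_symm h.1, fanD_symm h.2.2, fanD_symm h.2.1⟩

theorem dt_fanD_comm : Dt fanD c a b ↔ Dt fanD c b a :=
  ⟨dt_fanD_symm, dt_fanD_symm⟩

theorem dvd_of_fanD (hab : a ∣ b) (h : fanD c a b) : a ∣ c := by
  rcases fanD_iff.mp h with hca | hcb | ⟨-, hac⟩
  · exact hca ▸ dvd_mul_right a (c * c)
  · exact hcb ▸ hab.mul_right (c * c)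
  · exact hac

theorem fanD_tneg_mul_tneg_mul_iff :
    fanD (tneg * a) (tneg * c) b ↔
      c * (a * a) = a ∨ b * (a * a) = tneg * a ∨ a * c = a * b ∧ c ∣ a := by
  rw [fanD_iff, tneg_mul_mul_tneg_mul, tneg_mul_mul_tneg_mul, mul_assoc tneg c,
    isUnit_tneg.mul_right_inj, mul_assoc tneg a b, tneg_mul_tneg_mul,
    isUnit_tneg.mul_left_dvd, isUnit_tneg.dvd_mul_left]

theorem dt_fanD_self_left (hab : a ∣ b) : Dt fanD a a b := by
  refine ⟨fanD_self_left a b, fanD_self_left _ b, Or.inr (Or.inr ⟨?_, ?_⟩)⟩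
  · rw [tneg_mul_mul_tneg_mul, mul_assoc]
  · exact (dvd_iff_mul_self_mul_eq.mp (hab.mul_left tneg)).symm

theorem dt_fanD_self_right (hba : b ∣ a) : Dt fanD b a b :=
  dt_fanD_symm (dt_fanD_self_left hba)

theorem eq_left_or_eq_tneg_mul_or_eq_right_of_dt_fanD (hab : a ∣ b) (h : Dt fanD c a b) :
    c = a ∨ b = tneg * a ∨ c = b ∧ b ∣ a := by
  have hac : a * a * c = c := dvd_iff_mul_self_mul_eq.mp (dvd_of_fanD hab h.1)
  have hab' : a * a * b = b := dvd_iff_mul_self_mul_eq.mp hab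
  rcases fanD_tneg_mul_tneg_mul_iff.mp h.2.1 with hca | hba | ⟨hmul, hca⟩
  · rw [mul_comm, hac] at hca
    exact Or.inl hca
  · rw [mul_comm, hab'] at hba
    exact Or.inr (Or.inl hba)
  · have hcb : c = b := by rw [← hac, mul_assoc, hmul, ← mul_assoc, hab']
    exact Or.inr (Or.inr ⟨hcb, hcb ▸ hca⟩)

theorem setOf_dt_fanD_eq_singleton_left (hab : a ∣ b) (hba : ¬ b ∣ a) :
    {c : G | Dt fanD c a b} = {a} := by
  ext c
  constructor
  · intro hc
    rcases eq_left_or_eq_tneg_mul_or_eq_right_of_dt_fanD hab hc with hca | hneg | ⟨-, hba'⟩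
    · exact hca
    · exact absurd (hneg ▸ isUnit_tneg.mul_left_dvd.mpr dvd_rfl) hba
    · exact absurd hba' hba
  · rintro rfl
    exact dt_fanD_self_left hab

theorem setOf_dt_fanD_eq_singleton_right (hba : b ∣ a) (hab : ¬ a ∣ b) :
    {c : G | Dt fanD c a b} = {b} := by
  simp only [dt_fanD_comm (a := a), setOf_dt_fanD_eq_singleton_left hba hab]

theorem setOf_dt_fanD_eq_pair (hab : a ∣ b) (hba : b ∣ a) (hne : b ≠ tneg * a) :
    {c : G | Dt fanD c a b} = {a, b} := by
  ext c
  constructor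
  · intro hc
    rcases eq_left_or_eq_tneg_mul_or_eq_right_of_dt_fanD hab hc with hca | hneg | ⟨hcb, -⟩
    · exact Or.inl hca
    · exact absurd hneg hne
    · exact Or.inr hcb
  · rintro (rfl | rfl)
    · exact dt_fanD_self_left hab
    · exact dt_fanD_self_right hba

theorem dt_fanD_tneg_mul_iff : Dt fanD c a (tneg * a) ↔ a ∣ c := by
  constructor
  · exact fun h => dvd_of_fanD (dvd_mul_left a tneg) h.1
  · intro hac
    have hopp : c * a = tneg * (c * (tneg * a)) := by
      rw [mul_left_comm c, tneg_mul_tneg_mul]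
    refine ⟨fanD_iff.mpr (Or.inr (Or.inr ⟨hopp, hac⟩)), fanD_self_right _ _, ?_⟩
    rw [tneg_mul_tneg_mul]
    exact fanD_self_left a _

end Fan

theorem stmt_8_general {G : Type u} [TernarySemigroup G] (a b : G) :
    ((a * a * (b * b) = b * b ∧ a * a ≠ b * b) → {c : G | Dt fanD c a b} = {a}) ∧
    ((a * a * (b * b) = a * a ∧ a * a ≠ b * b) → {c : G | Dt fanD c a b} = {b}) ∧
    ((a * a = b * b ∧ b ≠ tneg * a) → {c : G | Dt fanD c a b} = {a, b}) ∧
    (b = tneg * a → {c : G | Dt fanD c a b} = {y : G | ∃ x : G, y = a * x}) := by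
  rw [mul_self_mul_mul_self_eq_right_iff, mul_self_mul_mul_self_eq_left_iff, Ne,
    mul_self_eq_mul_self_iff_dvd_dvd]
  refine ⟨?_, ?_, ?_, ?_⟩
  · rintro ⟨hab, hne⟩
    exact setOf_dt_fanD_eq_singleton_left hab fun hba => hne ⟨hab, hba⟩
  · rintro ⟨hba, hne⟩
    exact setOf_dt_fanD_eq_singleton_right hba fun hab => hne ⟨hab, hba⟩
  · rintro ⟨⟨hab, hba⟩, hne⟩
    exact setOf_dt_fanD_eq_pair hab hba hne
  · rintro rfl
    exact Set.ext fun c => dt_fanD_tneg_mul_iff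

/-- The transversal relation derived from the fan representation relation on a ternary
semigroup satisfying condition [Z] admits the explicit case description. -/
theorem stmt_8 {G : Type u} [TernarySemigroup G] (hZ : CondZ G) (a b : G) :
    ((a * a * (b * b) = b * b ∧ a * a ≠ b * b) → {c : G | Dt fanD c a b} = {a}) ∧
    ((a * a * (b * b) = a * a ∧ a * a ≠ b * b) → {c : G | Dt fanD c a b} = {b}) ∧
    ((a * a = b * b ∧ b ≠ tneg * a) → {c : G | Dt fanD c a b} = {a, b}) ∧
    (b = tneg * a → {c : G | Dt fanD c a b} = {y : G | ∃ x : G, y = a * x}) :=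
  stmt_8_general a b
end

section
/- Let G be a ternary semigroup satisfying condition [Z], equipped with the fan representation relation D (so that (G,D) is a RS-fan). Let H be any real semigroup (a TS with a ternary relation D_H satisfying [RS0]–[RS8]), and let f : G → H be a homomorphism of ternary semigroups (f preserves multiplication and sends 1, 0, -1 to 1, 0, -1). Then f preserves representation: for all a, b, c ∈ G, c ∈ D(a,b) implies f(c) ∈ D_H(f(a), f(b)). -/
universe u

open TernarySemigroup

/-- The real semigroup axioms [RS0]-[RS8] for a ternary relation `D` on a ternary semigroup
(`D c a b` means `c ∈ D(a,b)`). -/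
def IsRealSemigroup {G : Type u} [TernarySemigroup G] (D : G → G → G → Prop) : Prop :=
  (∀ a b c : G, D c a b ↔ D c b a) ∧
  (∀ a b : G, D a a b) ∧
  (∀ a b c d : G, D a b c → D (a * d) (b * d) (c * d)) ∧
  (∀ a b c d e : G, Dt D a b c → Dt D c d e → ∃ x : G, Dt D x b d ∧ Dt D a x e) ∧
  (∀ a b c d e : G, D e (c * c * a) (d * d * b) → D e a b) ∧
  (∀ a b c d e : G, a * d = b * d → a * e = b * e → D c d e → a * c = b * c) ∧
  (∀ a b c : G, D c a b → Dt D c (c * c * a) (c * c * b)) ∧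
  (∀ a b : G, (∃ x : G, Dt D x a (tneg * b) ∧ Dt D x b (tneg * a)) → a = b) ∧
  (∀ a b c : G, D a b c → D (a * a) (b * b) (c * c))

/-!
The fan relation of a ternary semigroup is contained in the representation relation of every real
semigroup structure on it. Being defined by equations in `·` and `-1`, it is also preserved by every
ternary semigroup homomorphism, and the two facts compose.

For the containment, `a x² ∈ D(a, b)` follows from [RS1] and [RS4]. Transversality of `1 ∈ D(1, -y)`
gives `y ∈ D(1, -1)` for every `y`. If `ca = -cb` and `c = a²c`, then `c²b = -c²a` and
`c = (ca)(c²a)`, so multiplying `ca ∈ D(1, -1)` by `c²a` gives `c ∈ D(c²a, c²b)`, whence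
`c ∈ D(a, b)` by [RS4].
-/

/-- The axioms [RS0], [RS1], [RS2], [RS4] and [RS6] of a real semigroup, for `D c a b` meaning
`c ∈ D(a,b)`. They already force `D` to contain the fan relation. -/
structure IsWeakRealSemigroup {H : Type*} [TernarySemigroup H] (D : H → H → H → Prop) : Prop where
  symm : ∀ {a b c : H}, D c a b → D c b a
  left_mem : ∀ a b : H, D a a b
  mul_right : ∀ {a b c : H} (d : H), D a b c → D (a * d) (b * d) (c * d)
  of_sq_mul : ∀ {a b e : H} (c d : H), D e (c * c * a) (d * d * b) → D e a b
  transversal : ∀ {a b c : H}, D c a b → Dt D c (c * c * a) (c * c * b)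

theorem IsRealSemigroup.isWeakRealSemigroup {H : Type*} [TernarySemigroup H]
    {D : H → H → H → Prop} (hD : IsRealSemigroup D) : IsWeakRealSemigroup D := by
  obtain ⟨rs0, rs1, rs2, -, rs4, -, rs6, -, -⟩ := hD
  exact
    { symm := (rs0 _ _ _).mp
      left_mem := rs1
      mul_right := rs2 _ _ _
      of_sq_mul := fun c d => rs4 _ _ c d _
      transversal := rs6 _ _ _ }

namespace IsWeakRealSemigroup

variable {H : Type*} [TernarySemigroup H] {D : H → H → H → Prop}

theorem mul_sq_mem_left (hD : IsWeakRealSemigroup D) (a b x : H) : D (a * (x * x)) a b := by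
  have h : D (x * x * a) (x * x * a) (1 * 1 * b) := hD.left_mem _ _
  rw [mul_comm a]
  exact hD.of_sq_mul x 1 h

theorem mem_one_tneg (hD : IsWeakRealSemigroup D) (y : H) : D y 1 tneg := by
  have h : Dt D 1 (1 * 1 * 1) (1 * 1 * (tneg * y)) := hD.transversal (hD.left_mem 1 (tneg * y))
  simpa only [← mul_assoc, tneg_mul_tneg, one_mul, mul_one] using h.2.2

theorem mul_mem_tneg_mul (hD : IsWeakRealSemigroup D) (y x : H) : D (y * x) x (tneg * x) := by
  simpa only [one_mul] using hD.mul_right x (hD.mem_one_tneg y)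

theorem mem_of_mul_eq_tneg_mul (hD : IsWeakRealSemigroup D) {a b c : H}
    (hab : c * a = tneg * (c * b)) (hc : c = a * a * c) : D c a b := by
  have hc_mul : c * a * (c * c * a) = c := calc
    c * a * (c * c * a) = a * a * (c * c * c) := by ac_rfl
    _ = c := by rw [cube, ← hc]
  have hb : tneg * (c * c * a) = c * c * b := calc
    tneg * (c * c * a) = tneg * c * (c * a) := by ac_rfl
    _ = tneg * c * (tneg * (c * b)) := by rw [hab]
    _ = tneg * tneg * (c * c * b) := by ac_rfl
    _ = c * c * b := by rw [tneg_mul_tneg, one_mul]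
  have h : D (c * a * (c * c * a)) (c * c * a) (tneg * (c * c * a)) := hD.mul_mem_tneg_mul _ _
  rw [hc_mul, hb] at h
  exact hD.of_sq_mul c c h

theorem of_fanD (hD : IsWeakRealSemigroup D) {a b c : H} (h : fanD c a b) : D c a b := by
  rcases h with ⟨x, rfl⟩ | ⟨x, rfl⟩ | ⟨hab, hc⟩
  · exact hD.mul_sq_mem_left a b x
  · exact hD.symm (hD.mul_sq_mem_left b a x)
  · exact hD.mem_of_mul_eq_tneg_mul hab hc

end IsWeakRealSemigroup

theorem fanD.map {G H : Type*} [TernarySemigroup G] [TernarySemigroup H] (f : G →ₙ* H)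
    (hneg : f tneg = tneg) {a b c : G} (h : fanD c a b) : fanD (f c) (f a) (f b) := by
  rcases h with ⟨x, hx⟩ | ⟨x, hx⟩ | ⟨hab, hc⟩
  · exact Or.inl ⟨f x, by rw [hx, map_mul, map_mul]⟩
  · exact Or.inr (Or.inl ⟨f x, by rw [hx, map_mul, map_mul]⟩)
  · refine Or.inr (Or.inr ⟨?_, ?_⟩)
    · rw [← hneg, ← map_mul, ← map_mul, ← map_mul, hab]
    · rw [← map_mul, ← map_mul, ← hc]

theorem stmt_10_general {G H : Type*} [TernarySemigroup G] [TernarySemigroup H]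
    {D : H → H → H → Prop} (hD : IsWeakRealSemigroup D) (f : G →ₙ* H) (hneg : f tneg = tneg)
    {a b c : G} (hc : fanD c a b) : D (f c) (f a) (f b) :=
  hD.of_fanD (hc.map f hneg)

/-- Any TS-homomorphism from a RS-fan `G` into a real semigroup `H` preserves the (fan)
representation relation, hence is a RS-homomorphism. -/
theorem stmt_10 {G : Type u} {H : Type u} [TernarySemigroup G] [TernarySemigroup H]
    (hZ : CondZ G) (DH : H → H → H → Prop) (hRS : IsRealSemigroup DH)
    (f : G → H) (hmul : ∀ x y : G, f (x * y) = f x * f y)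
    (hone : f 1 = 1) (hzero : f (tzero : G) = tzero) (hneg : f (tneg : G) = tneg)
    (a b c : G) (hc : fanD c a b) :
    DH (f c) (f a) (f b) :=
  stmt_10_general hRS.isWeakRealSemigroup ⟨f, hmul⟩ hneg hc
end

section
/- Let F be a RS-fan and let ≤ be its representation partial order. Then (F, ≤) is a lattice: every pair of elements of F has a least upper bound and a greatest lower bound with respect to ≤; moreover 1 is the smallest element and -1 is the largest element of (F, ≤). -/
universe u

open TernarySemigroup

/-- The representation partial order on a RS-fan: `a ≤ b` iff `a ∈ D(1,b)` and
`-b ∈ D(1,-a)`. -/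
def rle {G : Type u} [TernarySemigroup G] (a b : G) : Prop :=
  fanD a 1 b ∧ fanD (tneg * b) 1 (tneg * a)

/-!
Under [Z], `a ≤ b` holds exactly when `a` is an idempotent with `a * b = b`, or dually `-b` is an
idempotent with `(-b) * (-a) = -a`, or `a = b`. For incomparable `a` and `b`, condition [Z] lets us
assume that every zero of `a` is a zero of `b`, i.e. `a²b = b`. For an upper bound `c` of both,
`a ≤ c` is then of the second kind, so `-c` fixes `a` and hence `a²`; thus `-a²` is the join of `a`
and `b`. Meets are obtained from joins through the order-reversing involution `x ↦ -x`.
-/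

namespace TernarySemigroup

/-- An idempotent `e` acting as a unit on `b`. In a ternary semigroup, characters take
only the values `0` and `1` on such an `e`, and those vanishing at `e` vanish at `b`. -/
structure IsLocalUnit {M : Type*} [Mul M] (e b : M) : Prop where
  isIdempotentElem : IsIdempotentElem e
  mul_eq : e * b = b

variable {G : Type u} [TernarySemigroup G] {a b c s : G}

/-- Multiplication by `-1`, as a negation: `-x` is by definition `tneg * x`. -/
instance : HasDistribNeg G where
  neg x := tneg * x
  neg_neg x := by rw [← mul_assoc, tneg_mul_tneg, one_mul]
  neg_mul x y := mul_assoc tneg x y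
  mul_neg x y := mul_left_comm x tneg y

theorem tneg_mul (x : G) : tneg * x = -x := rfl

theorem isIdempotentElem_mul_self (x : G) : IsIdempotentElem (x * x) := by
  rw [IsIdempotentElem, ← mul_assoc, cube]

theorem mul_self_mul_eq_or_of_condZ (hZ : CondZ G) (a b : G) :
    a * a * b = b ∨ b * b * a = a := by
  rcases hZ a b with h | h
  · right
    calc b * b * a = b * b * (a * a * a) := by rw [cube]
      _ = a * a * (b * b) * a := by ac_rfl
      _ = a := by rw [h, cube]
  · left
    calc a * a * b = a * a * (b * b * b) := by rw [cube]
      _ = a * a * (b * b) * b := by ac_rfl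
      _ = b := by rw [h, cube]

theorem fanD_one_left_iff :
    fanD c 1 b ↔ IsIdempotentElem c ∨ c * c * b = c ∨ c * b = -c := by
  simp only [fanD, one_mul, mul_one, and_true, tneg_mul]
  refine or_congr ⟨?_, fun h => ⟨c, h.eq.symm⟩⟩ (or_congr ⟨?_, fun h => ⟨c, ?_⟩⟩ ?_)
  · rintro ⟨x, rfl⟩
    exact isIdempotentElem_mul_self x
  · rintro ⟨x, rfl⟩
    calc b * (x * x) * (b * (x * x)) * b = b * b * b * (x * x * x * x) := by ac_rfl
      _ = b * (x * x) := by rw [cube, cube]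
  · rw [mul_comm, h]
  · rw [eq_comm, neg_eq_iff_eq_neg]

theorem rle_refl (a : G) : rle a a :=
  ⟨Or.inr (Or.inl ⟨a, by rw [← mul_assoc, cube]⟩),
    Or.inr (Or.inl ⟨a, by rw [mul_assoc, ← mul_assoc a, cube]⟩)⟩

theorem rle_neg_comm : rle a (-b) ↔ rle b (-a) := by
  simp only [rle, tneg_mul, neg_neg, and_comm]

theorem neg_rle_neg_iff : rle (-a) (-b) ↔ rle b a := by
  rw [rle_neg_comm, neg_neg]

theorem neg_rle_comm : rle (-a) b ↔ rle (-b) a := by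
  rw [← neg_rle_neg_iff, neg_neg]

theorem rle_of_isLocalUnit (h : IsLocalUnit a b) : rle a b := by
  simp only [rle, fanD_one_left_iff, tneg_mul, neg_mul_neg, neg_neg]
  exact ⟨Or.inl h.isIdempotentElem, Or.inr (Or.inr (by rw [mul_comm, h.mul_eq]))⟩

theorem rle_neg_of_isLocalUnit (h : IsLocalUnit b (-a)) : rle a (-b) :=
  rle_neg_comm.2 (rle_of_isLocalUnit h)

theorem isLocalUnit_or_eq_of_fanD (hab : fanD a 1 b) (hzero : a * a * b = b) :
    IsLocalUnit a b ∨ IsLocalUnit (-b) (-a) ∨ a = b := by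
  rcases fanD_one_left_iff.1 hab with hidem | heq | hneg
  · exact Or.inl ⟨hidem, by rwa [hidem.eq] at hzero⟩
  · exact Or.inr (Or.inr (heq.symm.trans hzero))
  · have hb : -b = a * a := by rw [← hzero, mul_assoc, hneg, mul_neg, neg_neg]
    refine Or.inr (Or.inl ⟨hb ▸ isIdempotentElem_mul_self a, ?_⟩)
    rw [hb, mul_neg, cube]

theorem rle_iff (hZ : CondZ G) :
    rle a b ↔ IsLocalUnit a b ∨ IsLocalUnit (-b) (-a) ∨ a = b := by
  constructor
  · rintro ⟨hab, hba⟩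
    rcases mul_self_mul_eq_or_of_condZ hZ a b with hzero | hzero
    · exact isLocalUnit_or_eq_of_fanD hab hzero
    · have hdual := isLocalUnit_or_eq_of_fanD (a := -b) (b := -a) hba
        (by rw [neg_mul_neg, mul_neg, hzero])
      rw [neg_neg, neg_neg, neg_inj, eq_comm (a := b)] at hdual
      exact or_left_comm.1 hdual
  · rintro (h | h | rfl)
    · exact rle_of_isLocalUnit h
    · simpa only [neg_neg] using rle_neg_of_isLocalUnit h
    · exact rle_refl a

theorem one_rle (a : G) : rle 1 a :=
  rle_of_isLocalUnit ⟨.one, one_mul a⟩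

theorem rle_tneg (a : G) : rle a tneg := by
  rw [← mul_one tneg]
  exact rle_neg_comm.2 (one_rle (-a))

/-- `s` is a least upper bound of `a` and `b` for the representation order. -/
def IsJoin (a b s : G) : Prop :=
  rle a s ∧ rle b s ∧ ∀ c : G, rle a c → rle b c → rle s c

/-- `m` is a greatest lower bound of `a` and `b` for the representation order. -/
def IsMeet (a b m : G) : Prop :=
  rle m a ∧ rle m b ∧ ∀ c : G, rle c a → rle c b → rle c m

theorem IsJoin.symm (h : IsJoin a b s) : IsJoin b a s :=
  ⟨h.2.1, h.1, fun c hb ha => h.2.2 c ha hb⟩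

theorem IsJoin.isMeet_of_neg (h : IsJoin (-a) (-b) s) : IsMeet a b (-s) := by
  refine ⟨neg_rle_comm.1 h.1, neg_rle_comm.1 h.2.1, fun c hca hcb => rle_neg_comm.1 ?_⟩
  exact h.2.2 (-c) (neg_rle_neg_iff.2 hca) (neg_rle_neg_iff.2 hcb)

theorem isJoin_neg_mul_self (hZ : CondZ G) (hab : ¬ rle a b) (hba : ¬ rle b a)
    (hzero : a * a * b = b) : IsJoin a b (-(a * a)) := by
  have hidem := isIdempotentElem_mul_self a
  refine ⟨rle_neg_of_isLocalUnit ⟨hidem, by rw [mul_neg, cube]⟩,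
    rle_neg_of_isLocalUnit ⟨hidem, by rw [mul_neg, hzero]⟩, fun c hac hbc => ?_⟩
  rcases (rle_iff hZ).1 hac with ha | hc | rfl
  · have : IsLocalUnit a b := ⟨ha.isIdempotentElem, by rwa [ha.isIdempotentElem.eq] at hzero⟩
    exact absurd (rle_of_isLocalUnit this) hab
  · refine (rle_iff hZ).2 (Or.inr (Or.inl ⟨hc.isIdempotentElem, ?_⟩))
    rw [neg_neg, ← neg_mul_neg a a, ← mul_assoc, hc.mul_eq]
  · exact absurd hbc hba

theorem exists_isJoin (hZ : CondZ G) (a b : G) : ∃ s, IsJoin a b s := by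
  by_cases hab : rle a b
  · exact ⟨b, hab, rle_refl b, fun _ _ hbc => hbc⟩
  by_cases hba : rle b a
  · exact ⟨a, rle_refl a, hba, fun _ hac _ => hac⟩
  rcases mul_self_mul_eq_or_of_condZ hZ a b with hzero | hzero
  · exact ⟨_, isJoin_neg_mul_self hZ hab hba hzero⟩
  · exact ⟨_, (isJoin_neg_mul_self hZ hba hab hzero).symm⟩

theorem exists_isMeet (hZ : CondZ G) (a b : G) : ∃ m, IsMeet a b m :=
  let ⟨s, hs⟩ := exists_isJoin hZ (-a) (-b)
  ⟨-s, hs.isMeet_of_neg⟩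

end TernarySemigroup

/-- A RS-fan, under its representation partial order, is a lattice with smallest element `1`
and largest element `-1`. -/
theorem stmt_16 (F : Type u) [TernarySemigroup F] (hZ : CondZ F) :
    (∀ a b : F, ∃ s : F, rle a s ∧ rle b s ∧ ∀ c : F, rle a c → rle b c → rle s c) ∧
    (∀ a b : F, ∃ m : F, rle m a ∧ rle m b ∧ ∀ c : F, rle c a → rle c b → rle c m) ∧
    (∀ a : F, rle 1 a) ∧
    (∀ a : F, rle a (tneg : F)) := by
  exact ⟨exists_isJoin hZ, exists_isMeet hZ, one_rle, rle_tneg⟩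
end

section
/- Let F be a RS-fan and let I be a proper ideal of F. Define the congruence ∼_I by: a ∼_I b iff h(a) = h(b) for every TS-character h of F with Z(h) = I. Then for all a, b ∈ F \ I: a ∼_I b if and only if there exists z ∈ F \ I with az = bz. -/
universe u

open TernarySemigroup

/-- An ideal of a ternary semigroup: a nonempty subset closed under multiplication
by arbitrary elements. -/
def TSIdeal {G : Type u} [TernarySemigroup G] (I : Set G) : Prop :=
  I.Nonempty ∧ ∀ x ∈ I, ∀ y : G, x * y ∈ I

/-!
Condition [Z] makes every proper ideal `I` prime, so `S = F \ I` is a submonoid. In its Grothendieck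
group, `x` and `y` are identified iff `x * z = y * z` for some `z ∈ S`. The law `x³ = x` makes this
group an elementary abelian 2-group, that is, a vector space over the field with two elements, and
`-1` stays nontrivial in it because `z = -z` forces `z = 0 ∈ I`. Two nontrivial elements of such a
vector space are sent to `-1` by a common sign character, so if `a` and `b` are not identified, some
sign character has value `-1` both on `-1` and on `a / b`. Extended by zero to `I`, it is a
TS-character with zero set `I` that separates `a` from `b`.
-/

section ExponentTwo

variable {G : Type*} [CommGroup G] {g k : G}

lemma exists_intUnitsHom_eq_neg_one (hG : ∀ x : G, x * x = 1) (hg : g ≠ 1) :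
    ∃ χ : G →* ℤˣ, χ g = -1 := by
  let _ : Module (ZMod 2) (Additive G) :=
    AddCommGroup.zmodModule fun x => (two_nsmul x).trans (hG x.toMul)
  obtain ⟨f, hf⟩ := Module.Projective.exists_dual_eq_one (ZMod 2)
    (x := Additive.ofMul g) (ofMul_eq_zero.not.mpr hg)
  refine ⟨MonoidHom.mk' (fun x => (-1) ^ f (Additive.ofMul x)) fun x y => ?_, ?_⟩
  · rw [ofMul_mul, map_add, uzpow_add]
  · rw [MonoidHom.mk'_apply, hf, uzpow_one]

lemma exists_intUnitsHom_eq_neg_one_and (hG : ∀ x : G, x * x = 1) (hg : g ≠ 1) (hk : k ≠ 1) :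
    ∃ χ : G →* ℤˣ, χ g = -1 ∧ χ k = -1 := by
  obtain ⟨χ, hχg⟩ := exists_intUnitsHom_eq_neg_one hG hg
  obtain ⟨ψ, hψk⟩ := exists_intUnitsHom_eq_neg_one hG hk
  rcases Int.units_eq_one_or (χ k) with hχk | hχk
  · rcases Int.units_eq_one_or (ψ g) with hψg | hψg
    · exact ⟨χ * ψ, by simp [hχg, hψg], by simp [hχk, hψk]⟩
    · exact ⟨ψ, hψg, hψk⟩
  · exact ⟨χ, hχg, hχk⟩

end ExponentTwo

section Grothendieck

open Algebra

variable {M : Type*} [CommMonoid M]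

lemma grothendieckGroup_of_eq_of_iff {x y : M} :
    GrothendieckGroup.of x = GrothendieckGroup.of y ↔ ∃ z : M, x * z = y * z := by
  simp [GrothendieckGroup.of, Submonoid.LocalizationMap.eq_iff_exists, mul_comm]

lemma grothendieckGroup_mul_self_eq_one (hM : ∀ x : M, x * x * x = x)
    (g : GrothendieckGroup M) : g * g = 1 := by
  have hsq : powMonoidHom 2 = (1 : GrothendieckGroup M →* GrothendieckGroup M) := by
    refine GrothendieckGroup.lift.symm.injective <| MonoidHom.ext fun x => ?_
    have hcube : GrothendieckGroup.of x ^ 2 * GrothendieckGroup.of x = GrothendieckGroup.of x := by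
      rw [pow_two, ← map_mul, ← map_mul, hM]
    exact mul_eq_right.mp hcube
  rw [← pow_two]
  exact DFunLike.congr_fun hsq g

end Grothendieck

section TernarySemigroup

variable {G : Type*} [TernarySemigroup G] {I : Set G} {h : G → SignType} {a b x y z : G}

lemma IsTSChar.eq_of_mul_eq_mul (hh : IsTSChar h) (hz : h z ≠ 0) (hab : a * z = b * z) :
    h a = h b :=
  mul_right_cancel₀ hz <| by rw [← hh.1, ← hh.1, hab]

namespace TSIdeal

lemma mul_mem_left (hI : TSIdeal I) (x : G) (hy : y ∈ I) : x * y ∈ I :=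
  mul_comm y x ▸ hI.2 y hy x

lemma tzero_mem (hI : TSIdeal I) : tzero ∈ I := by
  obtain ⟨x, hx⟩ := hI.1
  simpa only [mul_tzero] using hI.2 x hx tzero

lemma one_notMem (hI : TSIdeal I) (hproper : I ≠ Set.univ) : 1 ∉ I := fun h1 =>
  hproper <| Set.eq_univ_of_forall fun x => one_mul x ▸ hI.2 1 h1 x

lemma mul_self_mem_iff (hI : TSIdeal I) : x * x ∈ I ↔ x ∈ I :=
  ⟨fun hx => cube x ▸ hI.2 _ hx x, fun hx => hI.2 x hx x⟩

end TSIdeal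

/-- A prime ideal of a ternary semigroup: a proper ideal whose complement is closed under
multiplication. The zero set of a TS-character is always of this form. -/
structure IsPrimeTSIdeal (I : Set G) : Prop where
  isTSIdeal : TSIdeal I
  ne_univ : I ≠ Set.univ
  mul_notMem : ∀ {x y : G}, x ∉ I → y ∉ I → x * y ∉ I

lemma CondZ.isPrimeTSIdeal (hZ : CondZ G) (hI : TSIdeal I) (hproper : I ≠ Set.univ) :
    IsPrimeTSIdeal I where
  isTSIdeal := hI
  ne_univ := hproper
  mul_notMem {x y} hx hy hxy := by
    have hsq : x * x * (y * y) ∈ I := mul_mul_mul_comm x y x y ▸ hI.2 _ hxy (x * y)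
    rcases hZ x y with hZ | hZ <;> rw [hZ, hI.mul_self_mem_iff] at hsq
    · exact hx hsq
    · exact hy hsq

namespace IsPrimeTSIdeal

lemma one_notMem (hI : IsPrimeTSIdeal I) : 1 ∉ I :=
  hI.isTSIdeal.one_notMem hI.ne_univ

lemma tneg_notMem (hI : IsPrimeTSIdeal I) : tneg ∉ I := fun hneg =>
  hI.one_notMem <| tneg_mul_tneg (G := G) ▸ hI.isTSIdeal.2 _ hneg tneg

/-- The complement of a prime ideal `I`, as a submonoid on which the characters with zero set
`I` take the values `±1`. -/
def primeCompl (hI : IsPrimeTSIdeal I) : Submonoid G where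
  carrier := Iᶜ
  one_mem' := hI.one_notMem
  mul_mem' := hI.mul_notMem

open Classical in
/-- The extension by zero to all of `G` of a sign-valued homomorphism on the complement of `I`. -/
noncomputable def extendByZero (hI : IsPrimeTSIdeal I) (φ : hI.primeCompl →* ℤˣ) (x : G) :
    SignType :=
  if hx : x ∈ I then 0 else SignType.sign (φ ⟨x, hx⟩ : ℤ)

section ExtendByZero

variable (hI : IsPrimeTSIdeal I) (φ : hI.primeCompl →* ℤˣ)

lemma extendByZero_of_mem (hx : x ∈ I) : hI.extendByZero φ x = 0 :=
  dif_pos hx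

lemma extendByZero_of_notMem (hx : x ∉ I) :
    hI.extendByZero φ x = SignType.sign (φ ⟨x, hx⟩ : ℤ) :=
  dif_neg hx

lemma extendByZero_eq_zero_iff : hI.extendByZero φ x = 0 ↔ x ∈ I := by
  refine ⟨fun hx => ?_, hI.extendByZero_of_mem φ⟩
  by_contra hxI
  rw [hI.extendByZero_of_notMem φ hxI, sign_eq_zero_iff] at hx
  exact (φ ⟨x, hxI⟩).ne_zero hx

lemma extendByZero_mul (x y : G) :
    hI.extendByZero φ (x * y) = hI.extendByZero φ x * hI.extendByZero φ y := by
  by_cases hx : x ∈ I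
  · rw [hI.extendByZero_of_mem φ hx, hI.extendByZero_of_mem φ (hI.isTSIdeal.2 x hx y), zero_mul]
  by_cases hy : y ∈ I
  · rw [hI.extendByZero_of_mem φ hy,
      hI.extendByZero_of_mem φ (hI.isTSIdeal.mul_mem_left x hy), mul_zero]
  rw [hI.extendByZero_of_notMem φ hx, hI.extendByZero_of_notMem φ hy,
    hI.extendByZero_of_notMem φ (hI.mul_notMem hx hy), ← sign_mul, ← Units.val_mul, ← map_mul]
  rfl

lemma isTSChar_extendByZero (hneg : φ ⟨tneg, hI.tneg_notMem⟩ = -1) :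
    IsTSChar (hI.extendByZero φ) := by
  refine ⟨hI.extendByZero_mul φ, ?_, hI.extendByZero_of_mem φ hI.isTSIdeal.tzero_mem, ?_⟩
  · have hone : φ ⟨1, hI.one_notMem⟩ = 1 := map_one φ
    rw [hI.extendByZero_of_notMem φ hI.one_notMem, hone, Units.val_one, sign_one]
  · rw [hI.extendByZero_of_notMem φ hI.tneg_notMem, hneg]
    rfl

lemma extendByZero_eq_iff (hx : x ∉ I) (hy : y ∉ I) :
    hI.extendByZero φ x = hI.extendByZero φ y ↔ φ ⟨x, hx⟩ = φ ⟨y, hy⟩ := by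
  have sign_injective : Function.Injective fun u : ℤˣ => SignType.sign (u : ℤ) := by decide
  rw [hI.extendByZero_of_notMem φ hx, hI.extendByZero_of_notMem φ hy]
  exact sign_injective.eq_iff

end ExtendByZero

open Algebra (GrothendieckGroup)

lemma of_eq_of_iff (hI : IsPrimeTSIdeal I) {x y : hI.primeCompl} :
    GrothendieckGroup.of x = GrothendieckGroup.of y ↔
      ∃ z, z ∉ I ∧ (x : G) * z = y * z := by
  rw [grothendieckGroup_of_eq_of_iff]
  exact ⟨fun ⟨z, hz⟩ => ⟨z, z.2, congrArg Subtype.val hz⟩,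
    fun ⟨z, hzI, hz⟩ => ⟨⟨z, hzI⟩, Subtype.ext hz⟩⟩

lemma of_tneg_ne_one (hI : IsPrimeTSIdeal I) :
    GrothendieckGroup.of (⟨tneg, hI.tneg_notMem⟩ : hI.primeCompl) ≠ 1 := by
  rw [← map_one GrothendieckGroup.of, Ne, of_eq_of_iff]
  rintro ⟨z, hzI, hz⟩
  have hz0 : z = tzero := eq_tzero_of_eq_tneg_mul z <| (one_mul z).symm.trans hz.symm
  exact hzI (hz0 ▸ hI.isTSIdeal.tzero_mem)

lemma exists_isTSChar_ne (hI : IsPrimeTSIdeal I) (ha : a ∉ I) (hb : b ∉ I)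
    (hab : ¬∃ z, z ∉ I ∧ a * z = b * z) :
    ∃ h : G → SignType, IsTSChar h ∧ {x | h x = 0} = I ∧ h a ≠ h b := by
  let α : hI.primeCompl := ⟨a, ha⟩
  let β : hI.primeCompl := ⟨b, hb⟩
  have hquot : GrothendieckGroup.of α / GrothendieckGroup.of β ≠ 1 :=
    div_ne_one.mpr <| hI.of_eq_of_iff.not.mpr hab
  obtain ⟨χ, hχneg, hχquot⟩ := exists_intUnitsHom_eq_neg_one_and
    (grothendieckGroup_mul_self_eq_one fun x => Subtype.ext (cube (x : G)))
    hI.of_tneg_ne_one hquot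
  let φ := χ.comp GrothendieckGroup.of
  have hφquot : φ α / φ β = -1 := (map_div χ _ _).symm.trans hχquot
  have hφ : φ α ≠ φ β := by
    rw [Ne, ← div_eq_one, hφquot]
    decide
  exact ⟨hI.extendByZero φ, hI.isTSChar_extendByZero φ hχneg,
    Set.ext fun x => hI.extendByZero_eq_zero_iff φ, (hI.extendByZero_eq_iff φ ha hb).not.mpr hφ⟩

end IsPrimeTSIdeal

theorem stmt_17_general (hI : IsPrimeTSIdeal I) (ha : a ∉ I) (hb : b ∉ I) :
    (∀ h : G → SignType, IsTSChar h → {x | h x = 0} = I → h a = h b) ↔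
      ∃ z, z ∉ I ∧ a * z = b * z := by
  constructor
  · intro hcongr
    by_contra hab
    obtain ⟨h, hh, hzero, hne⟩ := hI.exists_isTSChar_ne ha hb hab
    exact hne (hcongr h hh hzero)
  · rintro ⟨z, hzI, hz⟩ h hh rfl
    exact hh.eq_of_mul_eq_mul hzI hz

end TernarySemigroup

/-- In a RS-fan `F` with a proper ideal `I`, two elements outside `I` are congruent modulo
`I` (i.e., identified by every TS-character with zero-set `I`) iff they become equal after
scaling by some element outside `I`. -/
theorem stmt_17 {F : Type u} [TernarySemigroup F] (hZ : CondZ F)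
    (I : Set F) (hI : TSIdeal I) (hproper : I ≠ Set.univ)
    (a b : F) (ha : a ∉ I) (hb : b ∉ I) :
    ((∀ h : F → SignType, IsTSChar h → {x : F | h x = 0} = I → h a = h b) ↔
      ∃ z : F, z ∉ I ∧ a * z = b * z) := by
  exact stmt_17_general (hZ.isPrimeTSIdeal hI hproper) ha hb
end

section
/- Let G be a RS-fan. Let g, h be TS-characters of G with g ⇝ h (i.e., h = h²·g), and let I be an ideal of G with Z(g) ⊆ I ⊆ Z(h). Then there exists a TS-character f of G such that g ⇝ f (f = f²·g), f ⇝ h (h = h²·f), and Z(f) = I. -/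
universe u

open TernarySemigroup

/-! The character `f` agrees with `g` off `I` and vanishes on `I`. It is multiplicative because
under [Z] every ideal is prime: if `xy ∈ I`, then `x²y² ∈ I` is equal to `x²` or to `y²`, and
`x = x²·x` and `y = y²·y` are recovered from their squares. -/

section Specialization

variable {α : Type*} {g h : α → SignType} {I : Set α}

/-- The specialization relation `g ⇝ h`, that is `h = h²·g`, for maps into the ternary semigroup
`3`; only the values enter, so the maps need not be characters. -/
def TSSpecializes (g h : α → SignType) : Prop :=
  ∀ a, h a = h a * h a * g a

theorem tsSpecializes_indicator (s : Set α) (g : α → SignType) :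
    TSSpecializes g (s.indicator g) := by
  intro a
  by_cases ha : a ∈ s
  · rw [Set.indicator_of_mem ha]
    generalize g a = t
    decide +revert
  · simp [ha]

theorem TSSpecializes.indicator_compl_left (hgh : TSSpecializes g h)
    (hIh : I ⊆ {a | h a = 0}) : TSSpecializes (Iᶜ.indicator g) h := by
  intro a
  by_cases ha : a ∈ I
  · have hha : h a = 0 := hIh ha
    simp [hha]
  · rw [Set.indicator_of_mem (Set.mem_compl ha)]
    exact hgh a

theorem setOf_indicator_compl_eq_zero (hgI : {a | g a = 0} ⊆ I) :
    {a | Iᶜ.indicator g a = 0} = I := by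
  ext a
  rw [Set.mem_ofPred_eq, Set.indicator_apply_eq_zero]
  exact ⟨fun hga => by_contra fun ha => ha (hgI (hga ha)), fun ha hna => absurd ha hna⟩

end Specialization

section Ideal

variable {G : Type*} [TernarySemigroup G] {I : Set G} {x y : G}

theorem TSIdeal.mem_of_mul_self_mem (hI : TSIdeal I) (hxx : x * x ∈ I) : x ∈ I :=
  cube x ▸ hI.2 _ hxx x

theorem TSIdeal.mul_mem_iff (hI : TSIdeal I) (hZ : CondZ G) : x * y ∈ I ↔ x ∈ I ∨ y ∈ I := by
  constructor
  · intro hxy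
    have hsq : x * x * (y * y) ∈ I := mul_mul_mul_comm x y x y ▸ hI.2 _ hxy (x * y)
    rcases hZ x y with hx | hy
    · exact Or.inl (hI.mem_of_mul_self_mem (hx ▸ hsq))
    · exact Or.inr (hI.mem_of_mul_self_mem (hy ▸ hsq))
  · rintro (hx | hy)
    · exact hI.2 x hx y
    · exact mul_comm y x ▸ hI.2 y hy x

theorem IsTSChar.indicator_compl {g : G → SignType} (hg : IsTSChar g)
    (hprime : ∀ x y, x * y ∈ I ↔ x ∈ I ∨ y ∈ I) (hone : 1 ∉ I) :
    IsTSChar (Iᶜ.indicator g) := by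
  obtain ⟨g_mul, g_one, g_tzero, g_tneg⟩ := hg
  have htneg : tneg ∉ I := fun hmem =>
    hone (tneg_mul_tneg (G := G) ▸ (hprime tneg tneg).2 (Or.inl hmem))
  refine ⟨fun x y => ?_, ?_, ?_, ?_⟩
  · by_cases hx : x ∈ I <;> by_cases hy : y ∈ I <;> simp [hprime, hx, hy, g_mul]
  · rw [Set.indicator_of_mem (Set.mem_compl hone), g_one]
  · exact Set.indicator_apply_eq_zero.2 fun _ => g_tzero
  · rw [Set.indicator_of_mem (Set.mem_compl htneg), g_tneg]

end Ideal

theorem stmt_18_general {G : Type*} [TernarySemigroup G] (hZ : CondZ G) {g : G → SignType}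
    (hg : IsTSChar g) {I : Set G} (hI : TSIdeal I) (hone : 1 ∉ I) (hgI : {a | g a = 0} ⊆ I) :
    ∃ f : G → SignType, IsTSChar f ∧ TSSpecializes g f ∧ {a | f a = 0} = I ∧
      ∀ h : G → SignType, TSSpecializes g h → I ⊆ {a | h a = 0} → TSSpecializes f h :=
  ⟨Iᶜ.indicator g, hg.indicator_compl (fun _ _ => hI.mul_mem_iff hZ) hone,
    tsSpecializes_indicator _ g, setOf_indicator_compl_eq_zero hgI,
    fun _ hgh hIh => hgh.indicator_compl_left hIh⟩

/-- In a RS-fan, given characters `g ⇝ h` and an ideal `I` with `Z(g) ⊆ I ⊆ Z(h)`, there is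
an intermediate character `f` with `g ⇝ f ⇝ h` and `Z(f) = I`. -/
theorem stmt_18 {G : Type u} [TernarySemigroup G] (hZ : CondZ G)
    (g h : G → SignType) (hg : IsTSChar g) (hh : IsTSChar h)
    (hspec : ∀ a : G, h a = h a * h a * g a)
    (I : Set G) (hI : TSIdeal I)
    (hgI : {a : G | g a = 0} ⊆ I) (hIh : I ⊆ {a : G | h a = 0}) :
    ∃ f : G → SignType, IsTSChar f ∧ (∀ a : G, f a = f a * f a * g a) ∧
      (∀ a : G, h a = h a * h a * f a) ∧ {a : G | f a = 0} = I := by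
  have hone : (1 : G) ∉ I := fun hmem => one_ne_zero (hh.2.1.symm.trans (hIh hmem))
  obtain ⟨f, hf, hgf, hfI, hspecializes⟩ := stmt_18_general hZ hg hI hone hgI
  exact ⟨f, hf, hgf, hspecializes h hspec hIh, hfI⟩
end

section
/- Let A be a commutative ring and let T be a total preorder of A (a preorder with T ∪ -T = A). Then the real spectrum Sper(A,T) is totally ordered by specialization: any two prime cones α, β of A with T ⊆ α and T ⊆ β satisfy α ⊆ β or β ⊆ α. -/
/-- A preorder of a commutative ring `A`: a subset closed under addition and multiplication,
containing all squares, and not containing `-1`. -/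
def IsRingPreorder {A : Type*} [CommRing A] (T : Set A) : Prop :=
  (∀ x ∈ T, ∀ y ∈ T, x + y ∈ T) ∧ (∀ x ∈ T, ∀ y ∈ T, x * y ∈ T) ∧
  (∀ a : A, a * a ∈ T) ∧ (-1 : A) ∉ T

/-- A prime cone of a commutative ring `A` (a point of the real spectrum `Sper A`):
closed under addition and multiplication, `α ∪ -α = A`, `-1 ∉ α`, and the support
`α ∩ -α` is a prime ideal. -/
def IsPrimeCone {A : Type*} [CommRing A] (α : Set A) : Prop :=
  (∀ x ∈ α, ∀ y ∈ α, x + y ∈ α) ∧ (∀ x ∈ α, ∀ y ∈ α, x * y ∈ α) ∧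
  α ∪ (-α) = Set.univ ∧ (-1 : A) ∉ α ∧
  (∀ a b : A, a * b ∈ α ∩ (-α) → a ∈ α ∩ (-α) ∨ b ∈ α ∩ (-α))

theorem stmt_19_general {G : Type*} [AddGroup G] {T α β : Set G}
    (htotal : T ∪ (-T) = Set.univ)
    (hα : ∀ t ∈ T, ∀ x ∈ α, t + x ∈ α) (hβ : ∀ t ∈ T, ∀ x ∈ β, t + x ∈ β) :
    α ⊆ β ∨ β ⊆ α := by
  by_contra! hincomparable
  obtain ⟨⟨a, haα, haβ⟩, b, hbβ, hbα⟩ := hincomparable.imp Set.not_subset.mp Set.not_subset.mp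
  have hdiff : a - b ∈ T ∪ (-T) := htotal ▸ Set.mem_univ (a - b)
  rcases hdiff with hab | hneg
  · exact haβ (sub_add_cancel a b ▸ hβ (a - b) hab b hbβ)
  · have hba : b - a ∈ T := neg_sub a b ▸ Set.mem_neg.mp hneg
    exact hbα (sub_add_cancel b a ▸ hα (b - a) hba a haα)

/-- If `T` is a total preorder of a commutative ring `A`, then `Sper(A,T)` is totally
ordered by specialization: any two prime cones containing `T` are comparable by inclusion. -/
theorem stmt_19 {A : Type*} [CommRing A] (T : Set A)
    (hT : IsRingPreorder T) (htotal : T ∪ (-T) = Set.univ)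
    (α β : Set A) (hα : IsPrimeCone α) (hβ : IsPrimeCone β)
    (hTα : T ⊆ α) (hTβ : T ⊆ β) :
    α ⊆ β ∨ β ⊆ α :=
  stmt_19_general htotal (fun t ht => hα.1 t (hTα ht)) (fun t ht => hβ.1 t (hTβ ht))
end
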